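/- Let p, q ∈ V with p·p ≠ 0, let D := (p·p)(q·q) − (p·q)² and assume D > 0, let τ := ((p·q) + i·√D)/(p·p) ∈ ℂ and Ω := q − conj(τ)·p ∈ V ⊗ ℂ. Then Ω·conj(Ω) = 2D/(p·p); in particular, if p·p > 0 then Ω·conj(Ω) > 0, so the real span of Re Ω and Im Ω is a positive two-plane. -/

import Mathlib

/- STATEMENT 1: For the attractor period Ω = q − conj(τ)·p one has
Ω·conj(Ω) = 2D/(p·p); in particular if p·p > 0 then Ω·conj(Ω) > 0, so the
real span of Re Ω and Im Ω is a positive two-plane.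
We model the complexification V ⊗ ℂ as pairs (re, im) ∈ V × V. -/

noncomputable section

variable {V : Type*}

/-- Inclusion of `V` into its complexification `V × V`. -/
def toC [AddCommGroup V] [Module ℝ V] (v : V) : V × V := (v, 0)

/-- Coordinatewise complex conjugation on the complexification. -/
def conjC [AddCommGroup V] [Module ℝ V] (z : V × V) : V × V := (z.1, -z.2)

/-- Scalar multiplication by a complex number on the complexification. -/
def csmul [AddCommGroup V] [Module ℝ V] (c : ℂ) (z : V × V) : V × V :=
  (c.re • z.1 - c.im • z.2, c.re • z.2 + c.im • z.1)

/-- The ℂ-bilinear extension of a real bilinear form to the complexification. -/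
def Bc [AddCommGroup V] [Module ℝ V] (b : LinearMap.BilinForm ℝ V) (z w : V × V) : ℂ :=
  ⟨b z.1 w.1 - b z.2 w.2, b z.1 w.2 + b z.2 w.1⟩

theorem attractor_period_positive
    [AddCommGroup V] [Module ℝ V]
    (b : LinearMap.BilinForm ℝ V) (hsymm : ∀ x y : V, b x y = b y x)
    (p q : V) (hpp : b p p ≠ 0)
    (D : ℝ) (hD : D = b p p * b q q - b p q * b p q) (hDpos : 0 < D)
    (τ : ℂ) (hτ : τ = ((b p q : ℂ) + Complex.I * (Real.sqrt D : ℂ)) / ((b p p : ℝ) : ℂ))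
    (Ω : V × V) (hΩ : Ω = toC q - csmul (starRingEnd ℂ τ) (toC p)) :
    Bc b Ω (conjC Ω) = ((2 * D / b p p : ℝ) : ℂ) ∧
    (0 < b p p → 0 < 2 * D / b p p) := by
  have hs : Real.sqrt D * Real.sqrt D = D := Real.mul_self_sqrt hDpos.le
  have hre : τ.re = b p q / b p p := by
    rw [hτ, Complex.div_ofReal_re]; simp
  have him : τ.im = Real.sqrt D / b p p := by
    rw [hτ, Complex.div_ofReal_im]; simp
  refine ⟨?_, fun h => by positivity⟩
  have h1 : Ω.1 = q - (b p q / b p p) • p := by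
    rw [hΩ]; simp [toC, csmul, hre]
  have h2 : Ω.2 = (Real.sqrt D / b p p) • p := by
    rw [hΩ]; simp [toC, csmul, him]
  apply Complex.ext
  · rw [Complex.ofReal_re]
    simp only [Bc, conjC, h1, h2, map_sub, map_neg, map_smul, LinearMap.sub_apply,
      LinearMap.smul_apply, smul_eq_mul, hsymm q p]
    field_simp
    linear_combination hs - hD
  · rw [Complex.ofReal_im]
    simp only [Bc, conjC, map_neg, hsymm Ω.2 Ω.1]
    ring

end
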